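/- arXiv:2304.06108 — 2 statements merged into one kernel-verified Lean document; each statement's English description precedes it below -/
import Mathlib

section
/- Let P, Q ∈ L¹(0,π) be complex-valued, let ρ > 0, and suppose lim_{h→0⁺} ( ∫_{π−h}^{π} P(x) dx ) / h^ρ = ν with ν ≠ 0. Fix 0 < ε < π/10. Define e₁₁(π,λ) = e^{iπλ} ∑_{n=0}^∞ gₙ(π,λ). Then |Im λ|^ρ e^{−π|Im λ|} · |e₁₁(π,λ)| → 0 as |Im λ| → ∞, uniformly for λ in the sector Ω_ε⁺; that is, e₁₁(π,λ) = e^{π|Im λ|} o(1) / |Im λ|^ρ uniformly on Ω_ε⁺. -/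
/-!
Write `y = Im λ > 0`. Since `|e^{iπλ}| = e^{-πy}`, the claim is `y^ρ e^{-2πy} |∑ gₙ(π,λ)| → 0`.
The partial sums `E_N = ∑_{n<N} gₙ` satisfy

  `E_{N+1}(t) = 1 + ∫₀ᵗ e^{-2iλs} P(s) F_N(s) ds`,  `F_N(t) = ∫₀ᵗ e^{2iλs} Q(s) E_N(s) ds`,

and all bounds below are uniform in `N`, so they pass to the sum of the series.

A Gronwall-type induction (`norm_partialE_le`) gives `e^{-2yt} |E_N(t)| ≤ exp(‖P‖₁ ‖Q‖₁)`, hence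
`F_N` is bounded. Inserting this into the recursion once more gives `e^{-2yt} |E_N(t)| ≤ η(y,t)`
(`eta`), where `η` is bounded and tends to `0` as `y → ∞` for each `t > 0`. By dominated convergence
`sup |F_N| ≤ φ(y) = ∫ |Q| η(y,·) → 0` (`norm_partialF_le_phi`, `tendsto_phi`).

At `t = π`, integration by parts against `p(s) = ∫_s^π P` (`integral_parts`) yields

  `E_{N+1}(π) = 1 + ∫₀^π p(s) (-2iλ e^{-2iλs} F_N(s) + Q(s) E_N(s)) ds`.

The limit hypothesis gives `|p(s)| ≤ B (π-s)^ρ`, and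
`(y(π-s))^ρ e^{-2y(π-s)} ≤ ρ^ρ e^{-y(π-s)}`. After multiplication by `y^ρ e^{-2πy}` the first term
is at most a constant times `(|λ|/y) φ(y)`, where `|λ|/y ≤ 1/sin ε` in the sector, and the second at
most a constant times `∫ |Q(s)| e^{-y(π-s)} ds → 0` (`partial_estimate`, `tendsto_exp_kernel`).
-/

open MeasureTheory Real intervalIntegral

/-- The iterated integrals `gₙ(t,λ)`. -/
noncomputable def gIter (P Q : ℝ → ℂ) (lam : ℂ) : ℕ → ℝ → ℂ
  | 0, _ => 1
  | n + 1, t => ∫ t₁ in (0 : ℝ)..t,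
      Complex.exp (-(2 * Complex.I * lam * (t₁ : ℂ))) * P t₁ *
        ∫ t₂ in (0 : ℝ)..t₁,
          Complex.exp (2 * Complex.I * lam * (t₂ : ℂ)) * Q t₂ * gIter P Q lam n t₂

/-! ### Absolutely continuous functions -/

lemma ac_of_dist_le {X Y : Type*} [PseudoMetricSpace X] [PseudoMetricSpace Y]
    {f : ℝ → X} {g : ℝ → Y} {a b : ℝ} (hg : AbsolutelyContinuousOnInterval g a b)
    (h : ∀ x ∈ Set.uIcc a b, ∀ y ∈ Set.uIcc a b, dist (f x) (f y) ≤ dist (g x) (g y)) :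
    AbsolutelyContinuousOnInterval f a b := by
  rw [absolutelyContinuousOnInterval_iff] at hg ⊢
  intro ε hε
  obtain ⟨δ, hδ, H⟩ := hg ε hε
  refine ⟨δ, hδ, fun E hE hlt => lt_of_le_of_lt (Finset.sum_le_sum fun i hi => ?_) (H E hE hlt)⟩
  exact h _ (hE.1 i hi).1 _ (hE.1 i hi).2

lemma ac_primitive {f : ℝ → ℂ} {a b c : ℝ} (hf : IntervalIntegrable f volume a b)
    (hc : c ∈ Set.uIcc a b) :
    AbsolutelyContinuousOnInterval (fun x => ∫ t in c..x, f t) a b := by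
  refine ac_of_dist_le (hf.norm.absolutelyContinuousOnInterval_intervalIntegral hc) ?_
  intro x hx y hy
  have hi : ∀ z ∈ Set.uIcc a b, IntervalIntegrable f volume c z := fun z hz =>
    hf.mono_set (Set.uIcc_subset_uIcc hc hz)
  rw [dist_eq_norm, dist_eq_norm, integral_interval_sub_left (hi x hx) (hi y hy),
    integral_interval_sub_left (hi x hx).norm (hi y hy).norm, Real.norm_eq_abs]
  exact norm_integral_le_abs_integral_norm

/-- The fundamental theorem of calculus for complex-valued absolutely continuous functions. -/
lemma ac_ftc {f f' : ℝ → ℂ} {a b : ℝ} (hf : AbsolutelyContinuousOnInterval f a b)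
    (hd : ∀ᵐ x, x ∈ Set.uIcc a b → HasDerivAt f (f' x) x)
    (hi : IntervalIntegrable f' volume a b) :
    ∫ x in a..b, f' x = f b - f a := by
  let g (x : ℝ) := f x - ∫ t in a..x, f' t
  have g_ac : AbsolutelyContinuousOnInterval g a b := hf.sub (ac_primitive hi (by simp))
  have g0 : ∀ᵐ x, x ∈ Set.uIcc a b → HasDerivAt g 0 x := by
    filter_upwards [hd, hi.ae_hasDerivAt_integral] with x hx₁ hx₂ hx₃
    have := (hx₁ hx₃).sub (hx₂ hx₃ a (by simp))
    rwa [sub_self] at this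
  obtain ⟨C, hC⟩ := g_ac.const_of_ae_hasDerivAt_zero g0
  have h1 : f a = g a := by simp [g]
  have h2 := hC a (by simp)
  have h3 := hC b (by simp)
  have h4 : g b = f b - ∫ t in a..b, f' t := rfl
  rw [h1, h2, ← h3, h4]; ring

/-- The integral inequality behind the Gronwall-type bound: with `p(x) = ∫₀ˣ u`, the function
`e^{K p}` is nondecreasing with a.e. derivative `K u e^{K p}`, and the integral of the derivative
of a monotone function is at most its increment. -/
lemma integral_mul_exp_primitive_le {u : ℝ → ℝ} {K s : ℝ} (hs : 0 ≤ s) (hK : 0 ≤ K)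
    (hu : IntervalIntegrable u volume 0 s) (hu0 : ∀ x, 0 ≤ u x) :
    ∫ x in (0 : ℝ)..s, u x * (K * Real.exp (K * ∫ t in (0 : ℝ)..x, u t))
      ≤ Real.exp (K * ∫ t in (0 : ℝ)..s, u t) - 1 := by
  set f : ℝ → ℝ := fun x => Real.exp (K * ∫ t in (0 : ℝ)..x, u t) with hf
  have hmono : MonotoneOn f (Set.uIcc 0 s) := by
    rw [Set.uIcc_of_le hs]
    intro x hx y hy hxy
    simp only [hf]
    refine Real.exp_le_exp.mpr (mul_le_mul_of_nonneg_left ?_ hK)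
    have hi : ∀ z ∈ Set.Icc 0 s, IntervalIntegrable u volume 0 z := fun z hz =>
      hu.mono_set (by rw [Set.uIcc_of_le hz.1, Set.uIcc_of_le hs]
                      exact Set.Icc_subset_Icc_right hz.2)
    rw [← sub_nonneg, integral_interval_sub_left (hi y hy) (hi x hx)]
    exact integral_nonneg hxy fun t _ => hu0 t
  have hmem := hmono.intervalIntegral_deriv_mem_uIcc
  have hfs : f 0 ≤ f s := hmono (by simp) (by simp) hs
  rw [Set.uIcc_of_le (by linarith)] at hmem
  have hf0 : f 0 = 1 := by simp [hf]
  rw [hf0] at hmem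
  refine le_trans (le_of_eq ?_) hmem.2
  apply intervalIntegral.integral_congr_ae
  filter_upwards [hu.ae_hasDerivAt_integral] with x hx hxs
  have := ((hx (Set.uIoc_subset_uIcc hxs) 0 (by simp)).const_mul K).exp
  rw [this.deriv]; ring

/-! ### The partial sums of the series -/

/-- Partial sums `∑_{n<N} gₙ(t,λ)`. -/
noncomputable def partialE (P Q : ℝ → ℂ) (lam : ℂ) (N : ℕ) (t : ℝ) : ℂ :=
  ∑ n ∈ Finset.range N, gIter P Q lam n t

/-- The inner integral `∫₀ᵗ e^{2iλs} Q(s) ∑_{n<N} gₙ(s,λ) ds`. -/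
noncomputable def partialF (P Q : ℝ → ℂ) (lam : ℂ) (N : ℕ) (t : ℝ) : ℂ :=
  ∫ s in (0 : ℝ)..t, Complex.exp (2 * Complex.I * lam * (s : ℂ)) * Q s * partialE P Q lam N s

lemma norm_exp_pos (lam : ℂ) (t : ℝ) :
    ‖Complex.exp (2 * Complex.I * lam * (t : ℂ))‖ = Real.exp (-(2 * lam.im * t)) := by
  rw [Complex.norm_exp]; congr 1; simp

lemma norm_exp_neg (lam : ℂ) (t : ℝ) :
    ‖Complex.exp (-(2 * Complex.I * lam * (t : ℂ)))‖ = Real.exp (2 * lam.im * t) := by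
  rw [Complex.norm_exp]; congr 1; simp

lemma sub_int {f : ℝ → ℂ} (hf : IntervalIntegrable f volume 0 π) {t : ℝ} (ht : t ∈ Set.uIcc 0 π) :
    IntervalIntegrable f volume 0 t :=
  hf.mono_set (Set.uIcc_subset_uIcc (by simp) ht)

lemma int_pos {Q G : ℝ → ℂ} (lam : ℂ) (hQ : IntervalIntegrable Q volume 0 π)
    (hG : ContinuousOn G (Set.uIcc 0 π)) :
    IntervalIntegrable (fun s : ℝ => Complex.exp (2 * Complex.I * lam * (s : ℂ)) * Q s * G s)
      volume 0 π :=
  (hQ.continuousOn_mul (by fun_prop)).mul_continuousOn hG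

lemma int_neg {Q G : ℝ → ℂ} (lam : ℂ) (hQ : IntervalIntegrable Q volume 0 π)
    (hG : ContinuousOn G (Set.uIcc 0 π)) :
    IntervalIntegrable (fun s : ℝ => Complex.exp (-(2 * Complex.I * lam * (s : ℂ))) * Q s * G s)
      volume 0 π :=
  (hQ.continuousOn_mul (by fun_prop)).mul_continuousOn hG

section
variable {P Q : ℝ → ℂ}

lemma gIter_continuousOn (hP : IntervalIntegrable P volume 0 π)
    (hQ : IntervalIntegrable Q volume 0 π) (lam : ℂ) (n : ℕ) :
    ContinuousOn (gIter P Q lam n) (Set.uIcc 0 π) := by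
  induction n with
  | zero => exact continuousOn_const
  | succ n ih =>
    exact continuousOn_primitive_interval'
      (int_neg lam hP (continuousOn_primitive_interval' (int_pos lam hQ ih) (by simp))) (by simp)

lemma partialE_continuousOn (hP : IntervalIntegrable P volume 0 π)
    (hQ : IntervalIntegrable Q volume 0 π) (lam : ℂ) (N : ℕ) :
    ContinuousOn (partialE P Q lam N) (Set.uIcc 0 π) :=
  continuousOn_finsetSum _ fun n _ => gIter_continuousOn hP hQ lam n

lemma partialF_continuousOn (hP : IntervalIntegrable P volume 0 π)
    (hQ : IntervalIntegrable Q volume 0 π) (lam : ℂ) (N : ℕ) :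
    ContinuousOn (partialF P Q lam N) (Set.uIcc 0 π) :=
  continuousOn_primitive_interval' (int_pos lam hQ (partialE_continuousOn hP hQ lam N)) (by simp)

lemma partialE_succ (hP : IntervalIntegrable P volume 0 π)
    (hQ : IntervalIntegrable Q volume 0 π) (lam : ℂ) (N : ℕ) {t : ℝ} (ht : t ∈ Set.uIcc 0 π) :
    partialE P Q lam (N + 1) t = 1 + ∫ s in (0 : ℝ)..t,
      Complex.exp (-(2 * Complex.I * lam * (s : ℂ))) * P s * partialF P Q lam N s := by
  have hF : ∀ s ∈ Set.uIcc 0 π, partialF P Q lam N s = ∑ n ∈ Finset.range N,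
      ∫ r in (0 : ℝ)..s, Complex.exp (2 * Complex.I * lam * (r : ℂ)) * Q r * gIter P Q lam n r := by
    intro s hs
    rw [← integral_finsetSum fun n _ =>
      sub_int (int_pos lam hQ (gIter_continuousOn hP hQ lam n)) hs]
    simp only [partialF, partialE, Finset.mul_sum]
  rw [partialE, Finset.sum_range_succ', add_comm]
  congr 1
  simp only [gIter]
  rw [← integral_finsetSum fun n _ => sub_int (int_neg lam hP
    (continuousOn_primitive_interval'
      (int_pos lam hQ (gIter_continuousOn hP hQ lam n)) (by simp))) ht]
  refine integral_congr fun s hs => ?_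
  rw [hF s (Set.uIcc_subset_uIcc (by simp) ht hs), Finset.mul_sum]

lemma norm_partialF_le (hQ : IntervalIntegrable Q volume 0 π) {lam : ℂ} {N : ℕ} {t : ℝ}
    (ht : t ∈ Set.Icc 0 π) {b : ℝ → ℝ} (hb : ContinuousOn b (Set.uIcc 0 π))
    (h : ∀ s ∈ Set.Icc 0 t, ‖partialE P Q lam N s‖ ≤ Real.exp (2 * lam.im * s) * b s) :
    ‖partialF P Q lam N t‖ ≤ ∫ s in (0 : ℝ)..t, ‖Q s‖ * b s := by
  have htu : t ∈ Set.uIcc 0 π := by rwa [Set.uIcc_of_le pi_pos.le]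
  refine intervalIntegral.norm_integral_le_of_norm_le ht.1 (ae_of_all _ fun s hs => ?_)
    ((hQ.norm.mul_continuousOn hb).mono_set (Set.uIcc_subset_uIcc (by simp) htu))
  rw [norm_mul, norm_mul, norm_exp_pos]
  calc Real.exp (-(2 * lam.im * s)) * ‖Q s‖ * ‖partialE P Q lam N s‖
      ≤ Real.exp (-(2 * lam.im * s)) * ‖Q s‖ * (Real.exp (2 * lam.im * s) * b s) := by
        gcongr; exact h s ⟨hs.1.le, hs.2⟩
    _ = (Real.exp (-(2 * lam.im * s)) * Real.exp (2 * lam.im * s)) * (‖Q s‖ * b s) := by ring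
    _ = ‖Q s‖ * b s := by rw [← Real.exp_add]; simp

lemma norm_partialE_succ_le (hP : IntervalIntegrable P volume 0 π)
    (hQ : IntervalIntegrable Q volume 0 π) {lam : ℂ} {N : ℕ} {t : ℝ} (ht : t ∈ Set.Icc 0 π)
    {c : ℝ → ℝ} (hc : ContinuousOn c (Set.uIcc 0 π))
    (h : ∀ s ∈ Set.Icc 0 t, ‖partialF P Q lam N s‖ ≤ c s) :
    ‖partialE P Q lam (N + 1) t‖
      ≤ 1 + ∫ s in (0 : ℝ)..t, Real.exp (2 * lam.im * s) * ‖P s‖ * c s := by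
  have htu : t ∈ Set.uIcc 0 π := by rwa [Set.uIcc_of_le pi_pos.le]
  rw [partialE_succ hP hQ lam N htu]
  refine (norm_add_le _ _).trans ?_
  rw [norm_one]
  gcongr
  refine intervalIntegral.norm_integral_le_of_norm_le ht.1 (ae_of_all _ fun s hs => ?_)
    (((hP.norm.continuousOn_mul (by fun_prop)).mul_continuousOn hc).mono_set
      (Set.uIcc_subset_uIcc (by simp) htu))
  rw [norm_mul, norm_mul, norm_exp_neg]
  gcongr
  exact h s ⟨hs.1.le, hs.2⟩

lemma primitive_norm_mono (hP : IntervalIntegrable P volume 0 π) {s t : ℝ} (hs : 0 ≤ s)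
    (hst : s ≤ t) (ht : t ≤ π) :
    ∫ x in (0 : ℝ)..s, ‖P x‖ ≤ ∫ x in (0 : ℝ)..t, ‖P x‖ := by
  refine integral_mono_interval le_rfl hs hst (ae_of_all _ fun _ => norm_nonneg _) ?_
  exact hP.norm.mono_set (Set.uIcc_subset_uIcc (by simp)
    (by rw [Set.uIcc_of_le pi_pos.le]; exact ⟨hs.trans hst, ht⟩))

lemma primitive_norm_continuousOn (hP : IntervalIntegrable P volume 0 π) :
    ContinuousOn (fun t => ∫ x in (0 : ℝ)..t, ‖P x‖) (Set.uIcc 0 π) :=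
  continuousOn_primitive_interval' hP.norm (by simp)

lemma norm_partialF_le_of_const (hQ : IntervalIntegrable Q volume 0 π) {lam : ℂ} {N : ℕ} {t : ℝ}
    (ht : t ∈ Set.Icc 0 π) {M : ℝ} (hM : 0 ≤ M)
    (h : ∀ s ∈ Set.Icc 0 t, ‖partialE P Q lam N s‖ ≤ Real.exp (2 * lam.im * s) * M) :
    ‖partialF P Q lam N t‖ ≤ (∫ x in (0 : ℝ)..π, ‖Q x‖) * M := by
  refine (norm_partialF_le hQ ht (b := fun _ => M) continuousOn_const h).trans ?_
  rw [intervalIntegral.integral_mul_const]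
  exact mul_le_mul_of_nonneg_right (primitive_norm_mono hQ ht.1 ht.2 le_rfl) hM

/-- Gronwall-type bound, uniform in the number of terms and in `λ`. -/
lemma norm_partialE_le (hP : IntervalIntegrable P volume 0 π)
    (hQ : IntervalIntegrable Q volume 0 π) {lam : ℂ} (hy : 0 ≤ lam.im) (N : ℕ) :
    ∀ t ∈ Set.Icc 0 π, ‖partialE P Q lam N t‖ ≤ Real.exp (2 * lam.im * t) *
      Real.exp ((∫ x in (0 : ℝ)..π, ‖Q x‖) * ∫ x in (0 : ℝ)..t, ‖P x‖) := by
  set q := ∫ x in (0 : ℝ)..π, ‖Q x‖ with hq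
  have hq0 : 0 ≤ q := integral_nonneg pi_pos.le fun _ _ => norm_nonneg _
  induction N with
  | zero =>
    intro t _
    simp only [partialE, Finset.range_zero, Finset.sum_empty, norm_zero]
    positivity
  | succ N ih =>
    intro t ht
    have htu : t ∈ Set.uIcc 0 π := by rwa [Set.uIcc_of_le pi_pos.le]
    have hcont : ContinuousOn (fun s => q * Real.exp (q * ∫ x in (0 : ℝ)..s, ‖P x‖))
        (Set.uIcc 0 π) :=
      continuousOn_const.mul (continuousOn_const.mul (primitive_norm_continuousOn hP)).rexp
    have hF : ∀ s ∈ Set.Icc 0 t, ‖partialF P Q lam N s‖ ≤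
        q * Real.exp (q * ∫ x in (0 : ℝ)..s, ‖P x‖) := by
      intro s hs
      have hs' : s ∈ Set.Icc 0 π := ⟨hs.1, hs.2.trans ht.2⟩
      refine norm_partialF_le_of_const hQ hs' (by positivity) fun r hr => ?_
      refine (ih r ⟨hr.1, hr.2.trans hs'.2⟩).trans ?_
      gcongr
      exact primitive_norm_mono hP hr.1 hr.2 hs'.2
    refine (norm_partialE_succ_le hP hQ ht hcont hF).trans ?_
    have hint : IntervalIntegrable P volume 0 t := sub_int hP htu
    have hsub : Set.uIcc 0 t ⊆ Set.uIcc 0 π := Set.uIcc_subset_uIcc (by simp) htu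
    have h1 : ∫ s in (0 : ℝ)..t, Real.exp (2 * lam.im * s) * ‖P s‖ *
          (q * Real.exp (q * ∫ x in (0 : ℝ)..s, ‖P x‖))
        ≤ ∫ s in (0 : ℝ)..t, Real.exp (2 * lam.im * t) * (‖P s‖ *
          (q * Real.exp (q * ∫ x in (0 : ℝ)..s, ‖P x‖))) := by
      refine integral_mono_on ht.1 ?_ ?_ fun s hs => ?_
      · exact (hint.norm.continuousOn_mul (by fun_prop)).mul_continuousOn (hcont.mono hsub)
      · exact (hint.norm.mul_continuousOn (hcont.mono hsub)).const_mul _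
      · rw [mul_assoc]
        gcongr
        exact hs.2
    rw [intervalIntegral.integral_const_mul] at h1
    have h2 := integral_mul_exp_primitive_le ht.1 hq0 hint.norm fun _ => norm_nonneg _
    have h3 : 1 ≤ Real.exp (2 * lam.im * t) := Real.one_le_exp (by have := ht.1; positivity)
    nlinarith [mul_le_mul_of_nonneg_left h2 (Real.exp_pos (2 * lam.im * t)).le]

/-- The constant `exp(‖P‖₁ ‖Q‖₁)` that bounds `e^{-2 t Im λ} |∑_{n<N} gₙ(t,λ)|`. -/
noncomputable def gronwallConst (P Q : ℝ → ℂ) : ℝ :=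
  Real.exp ((∫ x in (0 : ℝ)..π, ‖Q x‖) * ∫ x in (0 : ℝ)..π, ‖P x‖)

/-- A majorant of `e^{-2 s y} |∑_{n<N} gₙ(s,λ)|`, `y = Im λ`, that tends to `0` as `y → ∞`
for every `s > 0`. -/
noncomputable def eta (P Q : ℝ → ℂ) (y s : ℝ) : ℝ :=
  Real.exp (-(2 * y * s)) * (1 + (∫ t in (0 : ℝ)..s, Real.exp (2 * y * t) * ‖P t‖) *
    ((∫ x in (0 : ℝ)..π, ‖Q x‖) * gronwallConst P Q))

/-- A majorant of the inner integrals `partialF`, uniform in the upper limit of integration. -/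
noncomputable def phi (P Q : ℝ → ℂ) (y : ℝ) : ℝ := ∫ s in (0 : ℝ)..π, ‖Q s‖ * eta P Q y s

lemma eta_nonneg (y : ℝ) {s : ℝ} (hs : 0 ≤ s) : 0 ≤ eta P Q y s := by
  have h1 : 0 ≤ ∫ t in (0 : ℝ)..s, Real.exp (2 * y * t) * ‖P t‖ :=
    integral_nonneg hs fun _ _ => by positivity
  have h2 : 0 ≤ ∫ x in (0 : ℝ)..π, ‖Q x‖ := integral_nonneg pi_pos.le fun _ _ => norm_nonneg _
  unfold eta gronwallConst
  positivity

lemma eta_continuousOn (hP : IntervalIntegrable P volume 0 π) (y : ℝ) :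
    ContinuousOn (eta P Q y) (Set.uIcc 0 π) := by
  have : ContinuousOn (fun s => ∫ t in (0 : ℝ)..s, Real.exp (2 * y * t) * ‖P t‖) (Set.uIcc 0 π) :=
    continuousOn_primitive_interval' (hP.norm.continuousOn_mul (by fun_prop)) (by simp)
  unfold eta
  fun_prop

lemma norm_partialE_le_const (hP : IntervalIntegrable P volume 0 π)
    (hQ : IntervalIntegrable Q volume 0 π) {lam : ℂ} (hy : 0 ≤ lam.im) (N : ℕ) {t : ℝ}
    (ht : t ∈ Set.Icc 0 π) :
    ‖partialE P Q lam N t‖ ≤ Real.exp (2 * lam.im * t) * gronwallConst P Q := by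
  have hq0 : 0 ≤ ∫ x in (0 : ℝ)..π, ‖Q x‖ := integral_nonneg pi_pos.le fun _ _ => norm_nonneg _
  refine (norm_partialE_le hP hQ hy N t ht).trans ?_
  unfold gronwallConst
  gcongr
  exact primitive_norm_mono hP ht.1 ht.2 le_rfl

lemma norm_partialE_le_eta (hP : IntervalIntegrable P volume 0 π)
    (hQ : IntervalIntegrable Q volume 0 π) {lam : ℂ} (hy : 0 ≤ lam.im) (N : ℕ) {t : ℝ}
    (ht : t ∈ Set.Icc 0 π) :
    ‖partialE P Q lam N t‖ ≤ Real.exp (2 * lam.im * t) * eta P Q lam.im t := by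
  cases N with
  | zero =>
    simp only [partialE, Finset.range_zero, Finset.sum_empty, norm_zero]
    have := eta_nonneg (P := P) (Q := Q) lam.im ht.1
    positivity
  | succ N =>
    refine (norm_partialE_succ_le hP hQ ht
      (c := fun _ => (∫ x in (0 : ℝ)..π, ‖Q x‖) * gronwallConst P Q) continuousOn_const
      fun s hs => ?_).trans (le_of_eq ?_)
    · have hs' : s ∈ Set.Icc 0 π := ⟨hs.1, hs.2.trans ht.2⟩
      exact norm_partialF_le_of_const hQ hs' (Real.exp_pos _).le fun r hr =>
        norm_partialE_le_const hP hQ hy N ⟨hr.1, hr.2.trans hs'.2⟩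
    · rw [intervalIntegral.integral_mul_const, eta, ← mul_assoc (Real.exp _) (Real.exp _),
        ← Real.exp_add]
      simp

lemma norm_partialF_le_phi (hP : IntervalIntegrable P volume 0 π)
    (hQ : IntervalIntegrable Q volume 0 π) {lam : ℂ} (hy : 0 ≤ lam.im) (N : ℕ) {t : ℝ}
    (ht : t ∈ Set.Icc 0 π) :
    ‖partialF P Q lam N t‖ ≤ phi P Q lam.im := by
  refine (norm_partialF_le hQ ht (eta_continuousOn (Q := Q) hP lam.im) fun s hs =>
    norm_partialE_le_eta hP hQ hy N ⟨hs.1, hs.2.trans ht.2⟩).trans ?_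
  refine integral_mono_interval le_rfl ht.1 ht.2 ?_
    (hQ.norm.mul_continuousOn (eta_continuousOn hP lam.im))
  refine (ae_restrict_iff' measurableSet_Ioc).mpr (ae_of_all _ fun s hs => ?_)
  exact mul_nonneg (norm_nonneg _) (eta_nonneg _ hs.1.le)

/-! ### Integration by parts and the estimate at `π` -/

/-- Integration by parts moves the derivative from the tail primitive of `P` to the other factor;
both boundary terms vanish. -/
lemma integral_parts (hP : IntervalIntegrable P volume 0 π)
    (hQ : IntervalIntegrable Q volume 0 π) (lam : ℂ) (N : ℕ) :
    ∫ s in (0 : ℝ)..π, Complex.exp (-(2 * Complex.I * lam * (s : ℂ))) * P s * partialF P Q lam N s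
      = ∫ s in (0 : ℝ)..π, -(∫ x in π..s, P x) *
        (-(2 * Complex.I * lam) * Complex.exp (-(2 * Complex.I * lam * (s : ℂ))) *
          partialF P Q lam N s + Q s * partialE P Q lam N s) := by
  set e : ℝ → ℂ := fun s => Complex.exp (-(2 * Complex.I * lam * (s : ℂ))) with he
  set R : ℝ → ℂ := fun s => ∫ x in π..s, P x with hR
  set F : ℝ → ℂ := partialF P Q lam N with hF
  set E : ℝ → ℂ := partialE P Q lam N with hE
  have hEc : ContinuousOn E (Set.uIcc 0 π) := partialE_continuousOn hP hQ lam N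
  have hFc : ContinuousOn F (Set.uIcc 0 π) := partialF_continuousOn hP hQ lam N
  have hRc : ContinuousOn R (Set.uIcc 0 π) := continuousOn_primitive_interval' hP (by simp)
  have hec : ContinuousOn e (Set.uIcc 0 π) := by fun_prop
  have hFi := int_pos lam hQ hEc
  have hed : ∀ s, HasDerivAt e (-(2 * Complex.I * lam) * e s) s := by
    intro s
    have h1 : HasDerivAt (fun s : ℝ => -(2 * Complex.I * lam * (s : ℂ)))
        (-(2 * Complex.I * lam)) s := by
      have := ((Complex.ofRealCLM.hasDerivAt (x := s)).const_mul (2 * Complex.I * lam)).fun_neg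
      simpa using this
    exact h1.cexp.congr_deriv (mul_comm _ _)
  have heac : AbsolutelyContinuousOnInterval e 0 π := by
    refine ContDiffOn.absolutelyContinuousOnInterval (ContDiff.contDiffOn ?_)
    have : ContDiff ℝ 1 (fun s : ℝ => (s : ℂ)) := Complex.ofRealCLM.contDiff
    exact ((contDiff_const.mul this).neg).cexp
  have hRac : AbsolutelyContinuousOnInterval R 0 π := ac_primitive hP (by simp)
  have hFac : AbsolutelyContinuousOnInterval F 0 π := ac_primitive hFi (by simp)
  have hHac : AbsolutelyContinuousOnInterval (R • (e • F)) 0 π := hRac.smul (heac.smul hFac)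
  have hI1 : IntervalIntegrable (fun s => e s * P s * F s) volume 0 π := int_neg lam hP hFc
  have hI2 : IntervalIntegrable
      (fun s => -(R s) * (-(2 * Complex.I * lam) * e s * F s + Q s * E s)) volume 0 π := by
    refine IntervalIntegrable.continuousOn_mul (IntervalIntegrable.add ?_ ?_) hRc.neg
    · exact ((continuousOn_const.mul hec).mul hFc).intervalIntegrable
    · exact hQ.mul_continuousOn hEc
  have key := ac_ftc (f' := fun s => e s * P s * F s -
    (-(R s) * (-(2 * Complex.I * lam) * e s * F s + Q s * E s))) hHac ?_ (hI1.sub hI2)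
  · rw [integral_sub hI1 hI2] at key
    have h0 : F 0 = 0 := by simp [hF, partialF]
    have hpi : R π = 0 := by simp [hR]
    rw [← sub_eq_zero, key]
    simp [h0, hpi]
  · filter_upwards [hP.ae_hasDerivAt_integral, hFi.ae_hasDerivAt_integral] with s h1 h2 hs
    have hR' : HasDerivAt R (P s) s := h1 hs π (by simp)
    have hF' : HasDerivAt F (Complex.exp (2 * Complex.I * lam * (s : ℂ)) * Q s * E s) s :=
      h2 hs 0 (by simp)
    have := hR'.mul ((hed s).mul hF')
    refine this.congr_deriv ?_
    have hee : e s * Complex.exp (2 * Complex.I * lam * (s : ℂ)) = 1 := by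
      simp only [he]; rw [← Complex.exp_add]; simp
    simp only [Pi.mul_apply]
    linear_combination (R s * Q s * E s) * hee

end

/-- Obtained by raising `x/ρ ≤ e^{x/ρ}` to the power `ρ`. -/
lemma rpow_mul_exp_le {ρ x : ℝ} (hρ : 0 < ρ) (hx : 0 ≤ x) :
    x ^ ρ * Real.exp (-(2 * x)) ≤ ρ ^ ρ * Real.exp (-x) := by
  have h1 : x / ρ ≤ Real.exp (x / ρ) := by linarith [Real.add_one_le_exp (x / ρ)]
  have h2 : (x / ρ) ^ ρ ≤ Real.exp x := by
    calc (x / ρ) ^ ρ ≤ (Real.exp (x / ρ)) ^ ρ := by gcongr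
      _ = Real.exp x := by rw [← Real.exp_mul]; congr 1; field_simp
  rw [Real.div_rpow hx hρ.le, div_le_iff₀ (by positivity)] at h2
  calc x ^ ρ * Real.exp (-(2 * x)) ≤ (Real.exp x * ρ ^ ρ) * Real.exp (-(2 * x)) := by gcongr
    _ = ρ ^ ρ * (Real.exp x * Real.exp (-(2 * x))) := by ring
    _ = ρ ^ ρ * Real.exp (-x) := by rw [← Real.exp_add]; congr 2; ring

/-- The limit hypothesis controls the tail primitive only near `π`; away from `π` the bound follows
from `P ∈ L¹`, at the price of a larger constant. -/
lemma tail_bound {P : ℝ → ℂ} (hP : IntervalIntegrable P volume 0 π) {ρ : ℝ} (hρ : 0 < ρ) {ν : ℂ}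
    (hlim : Filter.Tendsto
      (fun h : ℝ => (∫ x in Real.pi - h..Real.pi, P x) / ((h ^ ρ : ℝ) : ℂ))
      (nhdsWithin 0 (Set.Ioi 0)) (nhds ν)) :
    ∃ B : ℝ, 0 ≤ B ∧ ∀ t ∈ Set.Icc 0 π, ‖∫ x in π..t, P x‖ ≤ B * (π - t) ^ ρ := by
  have h1 : ∀ᶠ h in nhdsWithin (0 : ℝ) (Set.Ioi 0),
      ‖(∫ x in Real.pi - h..Real.pi, P x) / ((h ^ ρ : ℝ) : ℂ)‖ < ‖ν‖ + 1 :=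
    hlim.norm.eventually (gt_mem_nhds (by linarith))
  obtain ⟨h0, hh0, H⟩ := mem_nhdsGT_iff_exists_Ioo_subset.mp h1
  replace hh0 : 0 < h0 := hh0
  set p := ∫ x in (0 : ℝ)..π, ‖P x‖ with hp
  have hp0 : 0 ≤ p := integral_nonneg pi_pos.le fun _ _ => norm_nonneg _
  have hB1 : 0 ≤ ‖ν‖ + 1 := by positivity
  have hB2 : 0 ≤ p / h0 ^ ρ := by positivity
  refine ⟨(‖ν‖ + 1) + p / h0 ^ ρ, by positivity, fun t ht => ?_⟩
  rw [integral_symm, norm_neg]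
  rcases eq_or_lt_of_le ht.2 with rfl | hlt
  · simp [Real.zero_rpow hρ.ne']
  have hu : 0 < π - t := by linarith
  have hupos : 0 < (π - t) ^ ρ := by positivity
  rw [add_mul]
  by_cases hc : π - t < h0
  · have := H ⟨hu, hc⟩
    simp only [Set.mem_ofPred_eq, sub_sub_cancel, norm_div, Complex.norm_real, Real.norm_eq_abs,
      abs_of_pos hupos] at this
    rw [div_lt_iff₀ hupos] at this
    nlinarith
  · push Not at hc
    have h3 : ‖∫ x in t..π, P x‖ ≤ p := by
      refine (intervalIntegral.norm_integral_le_integral_norm ht.2).trans ?_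
      exact integral_mono_interval ht.1 ht.2 le_rfl (ae_of_all _ fun _ => norm_nonneg _) hP.norm
    have h4 : p ≤ p / h0 ^ ρ * (π - t) ^ ρ := by
      rw [div_mul_eq_mul_div, le_div_iff₀ (by positivity)]
      gcongr
    nlinarith

lemma integral_exp_le (y : ℝ) :
    y * ∫ s in (0 : ℝ)..π, Real.exp (-(y * (π - s))) ≤ 1 := by
  have : ∫ s in (0 : ℝ)..π, y * Real.exp (-(y * (π - s))) = 1 - Real.exp (-(y * π)) := by
    rw [integral_eq_sub_of_hasDerivAt (f := fun s => Real.exp (-(y * (π - s))))]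
    · simp
    · intro s _
      have := ((((hasDerivAt_id s).const_sub π).const_mul y).fun_neg).exp
      refine this.congr_deriv ?_
      simp only [id]; ring
    · exact Continuous.intervalIntegrable (by fun_prop) _ _
  rw [← intervalIntegral.integral_const_mul, this]
  linarith [Real.exp_pos (-(y * π))]

/-- The quantitative form of the theorem for partial sums; the right-hand side depends on `λ` only
through `Im λ`. The sector enters only through the bound `|λ| ≤ M Im λ`. -/
lemma partial_estimate {P Q : ℝ → ℂ} (hP : IntervalIntegrable P volume 0 π)
    (hQ : IntervalIntegrable Q volume 0 π) {ρ B M : ℝ} (hρ : 0 < ρ) (hB : 0 ≤ B)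
    (htail : ∀ t ∈ Set.Icc 0 π, ‖∫ x in π..t, P x‖ ≤ B * (π - t) ^ ρ)
    {lam : ℂ} (hy : 0 < lam.im) (hM : ‖lam‖ ≤ M * lam.im) (N : ℕ) :
    lam.im ^ ρ * Real.exp (-(2 * (π * lam.im))) * ‖partialE P Q lam (N + 1) π‖
      ≤ ρ ^ ρ * Real.exp (-lam.im) + B * ρ ^ ρ * (2 * M * phi P Q lam.im +
        gronwallConst P Q * ∫ s in (0 : ℝ)..π, Real.exp (-(lam.im * (π - s))) * ‖Q s‖) := by
  set y := lam.im with hydef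
  set c := y ^ ρ * Real.exp (-(2 * (π * y))) with hc
  have hc0 : 0 ≤ c := by positivity
  have hphi : 0 ≤ phi P Q y := integral_nonneg pi_pos.le fun s hs =>
    mul_nonneg (norm_nonneg _) (eta_nonneg _ hs.1)
  have hC1 : 0 ≤ gronwallConst P Q := (Real.exp_pos _).le
  have hone : c ≤ ρ ^ ρ * Real.exp (-y) := by
    refine le_trans ?_ (rpow_mul_exp_le hρ hy.le)
    rw [hc]
    gcongr
    nlinarith [pi_gt_three]
  rw [partialE_succ hP hQ lam N (by simp), integral_parts hP hQ lam N]
  have hmain : c * ‖∫ s in (0 : ℝ)..π, -(∫ x in π..s, P x) *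
        (-(2 * Complex.I * lam) * Complex.exp (-(2 * Complex.I * lam * (s : ℂ))) *
          partialF P Q lam N s + Q s * partialE P Q lam N s)‖
      ≤ ∫ s in (0 : ℝ)..π, (B * ρ ^ ρ * (2 * ‖lam‖ * phi P Q y) * Real.exp (-(y * (π - s))) +
          B * ρ ^ ρ * gronwallConst P Q * (Real.exp (-(y * (π - s))) * ‖Q s‖)) := by
    rw [← Real.norm_of_nonneg hc0, ← norm_smul, ← intervalIntegral.integral_smul]
    refine intervalIntegral.norm_integral_le_of_norm_le pi_pos.le (ae_of_all _ fun s hs => ?_) ?_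
    · have hs' : s ∈ Set.Icc 0 π := ⟨hs.1.le, hs.2⟩
      have hu : 0 ≤ π - s := by linarith [hs.2]
      rw [norm_smul, Real.norm_of_nonneg hc0, norm_mul, norm_neg]
      have h1 : ‖-(2 * Complex.I * lam) * Complex.exp (-(2 * Complex.I * lam * (s : ℂ))) *
          partialF P Q lam N s + Q s * partialE P Q lam N s‖ ≤
          Real.exp (2 * y * s) * (2 * ‖lam‖ * phi P Q y + gronwallConst P Q * ‖Q s‖) := by
        refine (norm_add_le _ _).trans ?_
        rw [norm_mul, norm_mul, norm_exp_neg, norm_neg, norm_mul, norm_mul, norm_mul,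
          Complex.norm_I, Complex.norm_ofNat]
        have hF := norm_partialF_le_phi hP hQ hy.le N hs'
        have hE := norm_partialE_le_const hP hQ hy.le N hs'
        calc 2 * 1 * ‖lam‖ * Real.exp (2 * y * s) * ‖partialF P Q lam N s‖ +
              ‖Q s‖ * ‖partialE P Q lam N s‖
            ≤ 2 * 1 * ‖lam‖ * Real.exp (2 * y * s) * phi P Q y +
              ‖Q s‖ * (Real.exp (2 * y * s) * gronwallConst P Q) := by gcongr
          _ = _ := by ring
      have h2 : c * (π - s) ^ ρ * Real.exp (2 * y * s) ≤ ρ ^ ρ * Real.exp (-(y * (π - s))) := by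
        refine le_trans (le_of_eq ?_) (rpow_mul_exp_le hρ (mul_nonneg hy.le hu))
        rw [hc, Real.mul_rpow hy.le hu]
        calc y ^ ρ * Real.exp (-(2 * (π * y))) * (π - s) ^ ρ * Real.exp (2 * y * s)
            = y ^ ρ * (π - s) ^ ρ * (Real.exp (-(2 * (π * y))) * Real.exp (2 * y * s)) := by ring
          _ = _ := by rw [← Real.exp_add]; congr 2; ring
      calc c * (‖∫ x in π..s, P x‖ * _)
          ≤ c * ((B * (π - s) ^ ρ) * (Real.exp (2 * y * s) *
            (2 * ‖lam‖ * phi P Q y + gronwallConst P Q * ‖Q s‖))) := by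
            gcongr
            exact htail s hs'
        _ = (c * (π - s) ^ ρ * Real.exp (2 * y * s)) *
            (B * (2 * ‖lam‖ * phi P Q y + gronwallConst P Q * ‖Q s‖)) := by ring
        _ ≤ (ρ ^ ρ * Real.exp (-(y * (π - s)))) *
            (B * (2 * ‖lam‖ * phi P Q y + gronwallConst P Q * ‖Q s‖)) := by gcongr
        _ = _ := by ring
    · refine IntervalIntegrable.add (Continuous.intervalIntegrable (by fun_prop) _ _) ?_
      exact (hQ.norm.continuousOn_mul (by fun_prop)).const_mul _
  rw [integral_add (Continuous.intervalIntegrable (by fun_prop) _ _)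
    ((hQ.norm.continuousOn_mul (by fun_prop)).const_mul _),
    intervalIntegral.integral_const_mul, intervalIntegral.integral_const_mul] at hmain
  have hJ0 : 0 ≤ ∫ s in (0 : ℝ)..π, Real.exp (-(y * (π - s))) :=
    integral_nonneg pi_pos.le fun _ _ => (Real.exp_pos _).le
  have hM0 : 0 ≤ M := by
    by_contra hneg
    push Not at hneg
    nlinarith [norm_nonneg lam]
  have hJ : ‖lam‖ * ∫ s in (0 : ℝ)..π, Real.exp (-(y * (π - s))) ≤ M := by
    calc _ ≤ (M * y) * ∫ s in (0 : ℝ)..π, Real.exp (-(y * (π - s))) := by gcongr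
      _ = M * (y * ∫ s in (0 : ℝ)..π, Real.exp (-(y * (π - s)))) := by ring
      _ ≤ M * 1 := by gcongr; exact integral_exp_le y
      _ = M := mul_one M
  have hJ2 : B * ρ ^ ρ * (2 * ‖lam‖ * phi P Q y) * ∫ s in (0 : ℝ)..π, Real.exp (-(y * (π - s)))
      ≤ B * ρ ^ ρ * (2 * M * phi P Q y) := by
    calc _ = B * ρ ^ ρ * (2 * phi P Q y) *
          (‖lam‖ * ∫ s in (0 : ℝ)..π, Real.exp (-(y * (π - s)))) := by ring
      _ ≤ B * ρ ^ ρ * (2 * phi P Q y) * M := by gcongr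
      _ = _ := by ring
  refine (mul_le_mul_of_nonneg_left (norm_add_le _ _) hc0).trans ?_
  rw [norm_one, mul_add, mul_one]
  linarith

/-! ### Limits as `Im λ → ∞` -/

lemma tendsto_exp_kernel {f : ℝ → ℂ} {k s : ℝ} (hk : 0 < k) (hs : 0 ≤ s)
    (hf : IntervalIntegrable f volume 0 s) :
    Filter.Tendsto (fun y : ℝ => ∫ t in (0 : ℝ)..s, Real.exp (-(k * y * (s - t))) * ‖f t‖)
      Filter.atTop (nhds 0) := by
  have h := tendsto_integral_filter_of_dominated_convergence (μ := volume) (a := 0) (b := s)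
    (l := Filter.atTop) (F := fun (y : ℝ) t => Real.exp (-(k * y * (s - t))) * ‖f t‖)
    (f := fun _ => (0 : ℝ)) (fun t => ‖f t‖) ?_ ?_ hf.norm ?_
  · simpa using h
  · exact Filter.Eventually.of_forall fun y =>
      (hf.norm.continuousOn_mul (g := fun t => Real.exp (-(k * y * (s - t))))
        (by fun_prop)).def'.aestronglyMeasurable
  · filter_upwards [Filter.eventually_ge_atTop 0] with y hy
    refine ae_of_all _ fun t ht => ?_
    rw [Set.uIoc_of_le hs] at ht
    rw [norm_mul, norm_norm, Real.norm_of_nonneg (Real.exp_pos _).le]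
    refine mul_le_of_le_one_left (norm_nonneg _) (Real.exp_le_one_iff.mpr ?_)
    have : 0 ≤ s - t := by linarith [ht.2]
    have : 0 ≤ k * y * (s - t) := by positivity
    linarith
  · have hne : ∀ᵐ t : ℝ, t ≠ s := by simp [ae_iff, measure_singleton]
    filter_upwards [hne] with t hts ht
    rw [Set.uIoc_of_le hs] at ht
    have hpos : 0 < k * (s - t) := mul_pos hk (by linarith [lt_of_le_of_ne ht.2 hts])
    have h1 : Filter.Tendsto (fun y : ℝ => Real.exp (-(k * y * (s - t)))) Filter.atTop (nhds 0) := by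
      refine Real.tendsto_exp_neg_atTop_nhds_zero.comp ?_
      have := Filter.tendsto_id.const_mul_atTop (β := ℝ) (l := Filter.atTop) hpos
      refine this.congr fun y => ?_
      simp only [id]; ring
    simpa using h1.mul_const ‖f t‖

lemma eta_eq (P Q : ℝ → ℂ) (y s : ℝ) :
    eta P Q y s = Real.exp (-(2 * y * s)) +
      (∫ t in (0 : ℝ)..s, Real.exp (-(2 * y * (s - t))) * ‖P t‖) *
      ((∫ x in (0 : ℝ)..π, ‖Q x‖) * gronwallConst P Q) := by
  have : ∫ t in (0 : ℝ)..s, Real.exp (-(2 * y * (s - t))) * ‖P t‖ =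
      Real.exp (-(2 * y * s)) * ∫ t in (0 : ℝ)..s, Real.exp (2 * y * t) * ‖P t‖ := by
    rw [← intervalIntegral.integral_const_mul]
    congr 1; ext t
    rw [← mul_assoc, ← Real.exp_add]
    congr 2; ring
  rw [this, eta]; ring

lemma tendsto_phi {P Q : ℝ → ℂ} (hP : IntervalIntegrable P volume 0 π)
    (hQ : IntervalIntegrable Q volume 0 π) :
    Filter.Tendsto (phi P Q) Filter.atTop (nhds 0) := by
  set D := (∫ x in (0 : ℝ)..π, ‖Q x‖) * gronwallConst P Q with hD
  have hD0 : 0 ≤ D := mul_nonneg (integral_nonneg pi_pos.le fun _ _ => norm_nonneg _)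
    (Real.exp_pos _).le
  have h := tendsto_integral_filter_of_dominated_convergence (μ := volume) (a := 0) (b := π)
    (l := Filter.atTop) (F := fun (y : ℝ) s => ‖Q s‖ * eta P Q y s)
    (f := fun _ => (0 : ℝ)) (fun s => ‖Q s‖ * (1 + (∫ x in (0 : ℝ)..π, ‖P x‖) * D))
    ?_ ?_ (hQ.norm.mul_const _) ?_
  · rw [intervalIntegral.integral_zero] at h
    exact h
  · exact Filter.Eventually.of_forall fun y =>
      (hQ.norm.mul_continuousOn (eta_continuousOn hP y)).def'.aestronglyMeasurable
  · filter_upwards [Filter.eventually_ge_atTop 0] with y hy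
    refine ae_of_all _ fun s hs => ?_
    rw [Set.uIoc_of_le pi_pos.le] at hs
    have hsu : s ∈ Set.uIcc 0 π := by rw [Set.uIcc_of_le pi_pos.le]; exact ⟨hs.1.le, hs.2⟩
    rw [norm_mul, norm_norm, Real.norm_of_nonneg (eta_nonneg y hs.1.le), eta_eq]
    have hys : 0 ≤ 2 * y * s := by have := hs.1.le; positivity
    gcongr
    · exact Real.exp_le_one_iff.mpr (by linarith)
    · refine le_trans ?_ (primitive_norm_mono hP hs.1.le hs.2 le_rfl)
      have hi := (sub_int hP hsu).norm
      refine integral_mono_on hs.1.le (hi.continuousOn_mul (by fun_prop)) hi fun t ht => ?_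
      refine mul_le_of_le_one_left (norm_nonneg _) (Real.exp_le_one_iff.mpr ?_)
      have : 0 ≤ s - t := by linarith [ht.2]
      have : 0 ≤ 2 * y * (s - t) := by positivity
      linarith
  · refine ae_of_all _ fun s hs => ?_
    rw [Set.uIoc_of_le pi_pos.le] at hs
    have hsu : s ∈ Set.uIcc 0 π := by rw [Set.uIcc_of_le pi_pos.le]; exact ⟨hs.1.le, hs.2⟩
    have h1 : Filter.Tendsto (fun y : ℝ => Real.exp (-(2 * y * s))) Filter.atTop (nhds 0) := by
      refine Real.tendsto_exp_neg_atTop_nhds_zero.comp ?_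
      have := Filter.tendsto_id.const_mul_atTop (β := ℝ) (l := Filter.atTop)
        (show 0 < 2 * s by linarith [hs.1])
      refine this.congr fun y => ?_
      simp only [id]; ring
    have h2 := tendsto_exp_kernel two_pos hs.1.le (sub_int hP hsu)
    have h3 := (h1.add (h2.mul_const D)).const_mul ‖Q s‖
    simp only [zero_mul, add_zero, mul_zero] at h3
    refine h3.congr fun y => ?_
    rw [eta_eq]

/-- Formula (45) of Lemma 4: if `P, Q ∈ L¹(0,π)`, `ρ > 0`, and
`lim_{h→0⁺} (∫_{π-h}^π P)/h^ρ = ν ≠ 0`, then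
`e₁₁(π,λ) = e^{iπλ} ∑_{n=0}^∞ gₙ(π,λ) = e^{π|Im λ|} o(1)/|Im λ|^ρ` uniformly in the
sector `Ω_ε⁺ = {ε ≤ arg λ ≤ π - ε}` as `|Im λ| → ∞`. -/
theorem e11_estimate_upper_sector
    (P Q : ℝ → ℂ)
    (hP : IntervalIntegrable P MeasureTheory.volume 0 Real.pi)
    (hQ : IntervalIntegrable Q MeasureTheory.volume 0 Real.pi)
    (ρ : ℝ) (hρ : 0 < ρ) (ν : ℂ) (hν : ν ≠ 0)
    (hlim : Filter.Tendsto
      (fun h : ℝ => (∫ x in Real.pi - h..Real.pi, P x) / ((h ^ ρ : ℝ) : ℂ))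
      (nhdsWithin 0 (Set.Ioi 0)) (nhds ν))
    (ε : ℝ) (hε : 0 < ε) (hε' : ε < Real.pi / 10)
    (e11 : ℂ → ℂ)
    (he11 : ∀ lam : ℂ, e11 lam =
      Complex.exp (Complex.I * (Real.pi : ℂ) * lam) * ∑' n : ℕ, gIter P Q lam n Real.pi) :
    ∀ δ > (0 : ℝ), ∃ C : ℝ, ∀ lam : ℂ,
      ε ≤ lam.arg → lam.arg ≤ Real.pi - ε → C ≤ |lam.im| →
        |lam.im| ^ ρ * Real.exp (-(Real.pi * |lam.im|)) * ‖e11 lam‖ ≤ δ := by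
  intro δ hδ
  obtain ⟨B, hB, htail⟩ := tail_bound hP hρ hlim
  have hsin : 0 < Real.sin ε := Real.sin_pos_of_pos_of_lt_pi hε (by linarith [pi_pos])
  have hψ := tendsto_exp_kernel one_pos pi_pos.le hQ
  have hW : Filter.Tendsto (fun y : ℝ => ρ ^ ρ * Real.exp (-y) + B * ρ ^ ρ *
      (2 * (Real.sin ε)⁻¹ * phi P Q y + gronwallConst P Q *
        ∫ s in (0 : ℝ)..π, Real.exp (-(1 * y * (π - s))) * ‖Q s‖)) Filter.atTop (nhds 0) := by
    have := (Real.tendsto_exp_neg_atTop_nhds_zero.const_mul (ρ ^ ρ)).add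
      ((((tendsto_phi hP hQ).const_mul (2 * (Real.sin ε)⁻¹)).add
        (hψ.const_mul (gronwallConst P Q))).const_mul (B * ρ ^ ρ))
    simpa only [mul_zero, add_zero] using this
  obtain ⟨C, hC⟩ := Filter.eventually_atTop.mp (hW.eventually (gt_mem_nhds hδ))
  refine ⟨max C 1, fun lam h1 h2 h3 => ?_⟩
  have harg : 0 ≤ lam.arg := hε.le.trans h1
  have him0 : 0 ≤ lam.im := Complex.arg_nonneg_iff.mp harg
  rw [abs_of_nonneg him0] at h3 ⊢
  have hy : 0 < lam.im := lt_of_lt_of_le one_pos ((le_max_right _ _).trans h3)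
  have hM : ‖lam‖ ≤ (Real.sin ε)⁻¹ * lam.im := by
    rw [inv_mul_eq_div, le_div_iff₀ hsin, ← Complex.norm_mul_sin_arg lam]
    refine mul_le_mul_of_nonneg_left ?_ (norm_nonneg _)
    -- On `[ε, π - ε]` the sine is at least `sin ε`, by monotonicity on each half.
    have hεpi : ε < π / 2 := by linarith [pi_pos]
    rcases le_total lam.arg (π / 2) with h | h
    · exact Real.sin_le_sin_of_le_of_le_pi_div_two (by linarith) h h1
    · rw [← Real.sin_pi_sub lam.arg]
      exact Real.sin_le_sin_of_le_of_le_pi_div_two (by linarith) (by linarith) (by linarith)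
  have hWlt := hC lam.im ((le_max_left _ _).trans h3)
  have hpart : ∀ N, lam.im ^ ρ * Real.exp (-(2 * (π * lam.im))) *
      ‖partialE P Q lam (N + 1) π‖ ≤ δ := fun N => by
    have := partial_estimate hP hQ hρ hB htail hy hM N
    simp only [one_mul] at hWlt
    exact this.trans hWlt.le
  have hsum : lam.im ^ ρ * Real.exp (-(2 * (π * lam.im))) *
      ‖∑' n : ℕ, gIter P Q lam n π‖ ≤ δ := by
    -- In the non-summable case the sum takes the junk value zero, and the bound is trivial.
    by_cases hs : Summable fun n => gIter P Q lam n π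
    · have ht := (Filter.tendsto_add_atTop_iff_nat 1).mpr hs.hasSum.tendsto_sum_nat
      exact le_of_tendsto' (ht.norm.const_mul _) hpart
    · rw [tsum_eq_zero_of_not_summable hs]
      simpa using hδ.le
  have hexp : ‖Complex.exp (Complex.I * (π : ℂ) * lam)‖ = Real.exp (-(π * lam.im)) := by
    rw [Complex.norm_exp]; congr 1; simp
  rw [he11, norm_mul, hexp]
  refine le_trans (le_of_eq ?_) hsum
  rw [show -(2 * (π * lam.im)) = -(π * lam.im) + -(π * lam.im) by ring, Real.exp_add]
  ring
end

section
/- Let P, Q ∈ L¹(0,π) be complex-valued, let ρ > 0, and suppose lim_{h→0⁺} ( ∫₀^h P(x) dx ) / h^ρ = ν with ν ≠ 0. Fix 0 < ε < π/10. Then |Im λ|^ρ · ∑_{n=1}^∞ |pₙ(t,λ)| → 0 as |Im λ| → ∞, uniformly in t ∈ [0,π] and uniformly for λ in the sector Ω_ε⁻; in particular, ∑_{n=1}^∞ pₙ(π,λ) = o(1) / |Im λ|^ρ uniformly on Ω_ε⁻. -/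
/-!
Write `η = |Im λ| = -Im λ`, so that `|e^{-2iλs}| = e^{-2ηs}`, and let `F(s) = ∫₀^s P`.

The limit hypothesis gives `|F(s)| ≤ K s^ρ` on `[0, π]` (`exists_primitive_le`). Integrating by
parts, `p₀(t) = e^{-2iλt} F(t) + 2iλ ∫₀^t e^{-2iλs} F(s) ds`; since `|λ| ≤ η / sin ε` in the sector,
this is at most `D η^{-ρ}` with `D` independent of `t` and `λ` (`norm_pIter_zero_le`).

The recursion satisfies `sup |p_{n+1}| ≤ A(η) sup |pₙ|` with
`A(η) = ∫₀^π |P(t)| ∫₀^t e^{-2η(t-s)} |Q(s)| ds dt` (`norm_pIter_succ_le`), and `A(η) → 0` as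
`η → ∞` by two applications of dominated convergence (`tendsto_integral_norm_mul_innerKernel`).
Hence `η^ρ ∑_{n ≥ 1} |pₙ| ≤ D A / (1 - A) → 0` by the geometric series.
-/

open MeasureTheory Real intervalIntegral

/-- The iterated integrals `pₙ(t,λ)`. -/
noncomputable def pIter (P Q : ℝ → ℂ) (lam : ℂ) : ℕ → ℝ → ℂ
  | 0, t => ∫ s in (0 : ℝ)..t, Complex.exp (-(2 * Complex.I * lam * (s : ℂ))) * P s
  | n + 1, t => ∫ t₁ in (0 : ℝ)..t,
      Complex.exp (-(2 * Complex.I * lam * (t₁ : ℂ))) * P t₁ *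
        ∫ t₂ in (0 : ℝ)..t₁,
          Complex.exp (2 * Complex.I * lam * (t₂ : ℂ)) * Q t₂ * pIter P Q lam n t₂

/-! ### The first iterate -/

/-- Integration by parts of an exponential against the primitive of a merely integrable `f`,
obtained from Fubini on the triangle `0 < s ≤ u ≤ t`. -/
lemma integral_exp_mul_by_parts {f : ℝ → ℂ} {t : ℝ} (ht : 0 ≤ t) (c : ℂ)
    (hf : IntervalIntegrable f volume 0 t) :
    ∫ s in (0 : ℝ)..t, Complex.exp (c * s) * f s =
      Complex.exp (c * t) * (∫ s in (0 : ℝ)..t, f s) -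
        ∫ u in (0 : ℝ)..t, c * Complex.exp (c * u) * ∫ s in (0 : ℝ)..u, f s := by
  -- Both iterated integrals below are those of `c e^{cu} f(s)` over the triangle `s ≤ u`.
  set μ : Measure ℝ := volume.restrict (Set.Ioc 0 t) with hμ
  have hfμ : Integrable f μ := (intervalIntegrable_iff_integrableOn_Ioc_of_le ht).1 hf
  have hker : Continuous fun u : ℝ => c * Complex.exp (c * u) := by fun_prop
  have hkμ : Integrable (fun u : ℝ => c * Complex.exp (c * u)) μ :=
    (intervalIntegrable_iff_integrableOn_Ioc_of_le ht).1 (hker.intervalIntegrable 0 t)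
  set T : Set (ℝ × ℝ) := {p | p.2 ≤ p.1} with hT
  have hTm : MeasurableSet T := measurableSet_le measurable_snd measurable_fst
  have hprod : Integrable
      (T.indicator fun p : ℝ × ℝ => c * Complex.exp (c * p.1) * f p.2) (μ.prod μ) :=
    (hkμ.mul_prod hfμ).indicator hTm
  have hswap := integral_integral_swap
    (f := fun u s => T.indicator (fun p : ℝ × ℝ => c * Complex.exp (c * p.1) * f p.2) (u, s)) hprod
  have hleft : ∫ u, ∫ s, T.indicator
      (fun p : ℝ × ℝ => c * Complex.exp (c * p.1) * f p.2) (u, s) ∂μ ∂μ =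
      ∫ u in (0 : ℝ)..t, c * Complex.exp (c * u) * ∫ s in (0 : ℝ)..u, f s := by
    rw [intervalIntegral.integral_of_le ht]
    refine setIntegral_congr_fun measurableSet_Ioc fun u hu => ?_
    have h1 : ∀ s, T.indicator (fun p : ℝ × ℝ => c * Complex.exp (c * p.1) * f p.2) (u, s) =
        (Set.Iic u).indicator (fun s => c * Complex.exp (c * u) * f s) s := by
      intro s; simp [Set.indicator, hT]
    simp only [h1]
    rw [MeasureTheory.integral_indicator measurableSet_Iic, hμ,
      Measure.restrict_restrict measurableSet_Iic,
      MeasureTheory.integral_const_mul, intervalIntegral.integral_of_le hu.1.le]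
    congr 3
    ext s; simp only [Set.mem_inter_iff, Set.mem_Iic, Set.mem_Ioc]
    exact ⟨fun h => ⟨h.2.1, h.1⟩, fun h => ⟨h.2, h.1, h.2.trans hu.2⟩⟩
  have hright : ∫ s, ∫ u, T.indicator
      (fun p : ℝ × ℝ => c * Complex.exp (c * p.1) * f p.2) (u, s) ∂μ ∂μ =
      ∫ s in (0 : ℝ)..t, (Complex.exp (c * t) - Complex.exp (c * s)) * f s := by
    rw [intervalIntegral.integral_of_le ht]
    refine setIntegral_congr_fun measurableSet_Ioc fun s hs => ?_
    have h1 : ∀ u, T.indicator (fun p : ℝ × ℝ => c * Complex.exp (c * p.1) * f p.2) (u, s) =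
        (Set.Ici s).indicator (fun u : ℝ => c * Complex.exp (c * u) * f s) u := by
      intro u; simp [Set.indicator, hT]
    have h2 : Set.Ici s ∩ Set.Ioc 0 t = Set.Icc s t := by
      ext u; simp only [Set.mem_inter_iff, Set.mem_Ici, Set.mem_Ioc, Set.mem_Icc]
      exact ⟨fun h => ⟨h.1, h.2.2⟩, fun h => ⟨h.1, hs.1.trans_le h.1, h.2⟩⟩
    have h3 : ∫ u in s..t, c * Complex.exp (c * u) =
        Complex.exp (c * t) - Complex.exp (c * s) := by
      refine integral_eq_sub_of_hasDerivAt (f := fun u : ℝ => Complex.exp (c * u))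
        (fun u _ => ?_) (hker.intervalIntegrable s t)
      have h := ((Complex.ofRealCLM.hasDerivAt (x := u)).const_mul c).cexp
      simpa [mul_comm] using h
    simp only [h1]
    rw [MeasureTheory.integral_indicator measurableSet_Ici, hμ,
      Measure.restrict_restrict measurableSet_Ici,
      h2, integral_Icc_eq_integral_Ioc, MeasureTheory.integral_mul_const,
      ← intervalIntegral.integral_of_le hs.2, h3]
  rw [← hleft, hswap, hright, ← intervalIntegral.integral_const_mul,
    ← intervalIntegral.integral_sub (hf.const_mul _)]
  · congr 1; ext s; ring
  · exact hf.continuousOn_mul (by fun_prop)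

/-- With `x = ηs`, this is `x ^ ρ ≤ ρ ^ ρ * exp x`, the `ρ`-th power of `x / ρ ≤ exp (x / ρ)`. -/
lemma rpow_mul_exp_neg_le {ρ η s : ℝ} (hρ : 0 < ρ) (hη : 0 < η) (hs : 0 ≤ s) :
    s ^ ρ * Real.exp (-(η * s)) ≤ ρ ^ ρ * η ^ (-ρ) := by
  have h1 : η * s ≤ ρ * Real.exp (η * s / ρ) := by
    have := Real.add_one_le_exp (η * s / ρ)
    have h2 : η * s / ρ ≤ Real.exp (η * s / ρ) := by linarith
    rw [div_le_iff₀ hρ] at h2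
    linarith
  have h2 : (η * s) ^ ρ ≤ ρ ^ ρ * Real.exp (η * s) := by
    refine (Real.rpow_le_rpow (by positivity) h1 hρ.le).trans_eq ?_
    rw [Real.mul_rpow hρ.le (Real.exp_pos _).le, ← Real.exp_mul, div_mul_cancel₀ _ hρ.ne']
  rw [Real.mul_rpow hη.le hs] at h2
  rw [Real.exp_neg, Real.rpow_neg hη.le, ← div_eq_mul_inv, ← div_eq_mul_inv,
    div_le_div_iff₀ (Real.exp_pos _) (Real.rpow_pos_of_pos hη _)]
  linarith

/-- The limit hypothesis gives the bound near `0`; away from `0` the primitive is bounded by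
the `L¹` norm of `P`, and `s ^ ρ` is bounded below. -/
lemma exists_primitive_le {P : ℝ → ℂ} (hP : IntervalIntegrable P volume 0 π)
    {ρ : ℝ} (hρ : 0 < ρ) {ν : ℂ}
    (hlim : Filter.Tendsto
      (fun h : ℝ => (∫ x in (0 : ℝ)..h, P x) / ((h ^ ρ : ℝ) : ℂ))
      (nhdsWithin 0 (Set.Ioi 0)) (nhds ν)) :
    ∃ K : ℝ, 0 ≤ K ∧ ∀ s ∈ Set.Icc (0 : ℝ) π, ‖∫ x in (0 : ℝ)..s, P x‖ ≤ K * s ^ ρ := by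
  have hev := hlim.norm.eventually (gt_mem_nhds (lt_add_one ‖ν‖))
  obtain ⟨a, ha, hsub⟩ := mem_nhdsGT_iff_exists_Ioo_subset.1 hev
  have ha : 0 < a := ha
  have hN : ∀ s ∈ Set.Icc (0 : ℝ) π, ‖∫ x in (0 : ℝ)..s, P x‖ ≤ ∫ x in (0 : ℝ)..π, ‖P x‖ := by
    intro s hs
    refine (intervalIntegral.norm_integral_le_integral_norm hs.1).trans ?_
    exact integral_mono_interval le_rfl hs.1 hs.2 (by filter_upwards; simp) hP.norm
  have hN0 : 0 ≤ ∫ x in (0 : ℝ)..π, ‖P x‖ := integral_nonneg pi_pos.le fun _ _ => norm_nonneg _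
  have haρ : 0 < a ^ ρ := Real.rpow_pos_of_pos ha _
  refine ⟨(‖ν‖ + 1) + (∫ x in (0 : ℝ)..π, ‖P x‖) / a ^ ρ, by positivity, fun s hs => ?_⟩
  have hsρ : 0 ≤ s ^ ρ := Real.rpow_nonneg hs.1 _
  rw [add_mul]
  rcases hs.1.eq_or_lt with h0 | h0
  · subst h0; simp [Real.zero_rpow hρ.ne']
  rcases lt_or_ge s a with h | h
  · have h1 : ‖(∫ x in (0 : ℝ)..s, P x) / ((s ^ ρ : ℝ) : ℂ)‖ < ‖ν‖ + 1 := hsub ⟨h0, h⟩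
    rw [norm_div, Complex.norm_real, Real.norm_of_nonneg hsρ,
      div_lt_iff₀ (Real.rpow_pos_of_pos h0 _)] at h1
    have : 0 ≤ (∫ x in (0 : ℝ)..π, ‖P x‖) / a ^ ρ * s ^ ρ := by positivity
    linarith
  · have h1 : a ^ ρ ≤ s ^ ρ := Real.rpow_le_rpow ha.le h hρ.le
    have h2 : (∫ x in (0 : ℝ)..π, ‖P x‖) ≤ (∫ x in (0 : ℝ)..π, ‖P x‖) / a ^ ρ * s ^ ρ := by
      rw [div_mul_eq_mul_div, le_div_iff₀ haρ]; gcongr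
    have : 0 ≤ (‖ν‖ + 1) * s ^ ρ := by positivity
    linarith [hN s hs]

lemma norm_exp_neg_kernel (lam : ℂ) (s : ℝ) :
    ‖Complex.exp (-(2 * Complex.I * lam * (s : ℂ)))‖ = Real.exp (2 * lam.im * s) := by
  rw [Complex.norm_exp]; congr 1; simp

lemma norm_exp_kernel (lam : ℂ) (s : ℝ) :
    ‖Complex.exp (2 * Complex.I * lam * (s : ℂ))‖ = Real.exp (-(2 * lam.im * s)) := by
  rw [Complex.norm_exp]; congr 1; simp

/-- `p₀ = O(η ^ (-ρ))` uniformly in `t`: integration by parts trades `P` for its primitive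
`O(s ^ ρ)` at the cost of a factor `|λ| ≤ Mη`, which is compensated by `∫ e^{-ηs} ds ≤ 1/η`. -/
lemma norm_pIter_zero_le {P Q : ℝ → ℂ} (hP : IntervalIntegrable P volume 0 π)
    {ρ K M η : ℝ} (hρ : 0 < ρ) (hK : 0 ≤ K)
    (hF : ∀ s ∈ Set.Icc (0 : ℝ) π, ‖∫ x in (0 : ℝ)..s, P x‖ ≤ K * s ^ ρ)
    (hη : 0 < η) {lam : ℂ} (him : lam.im = -η) (hlam : ‖lam‖ ≤ M * η)
    {t : ℝ} (ht : t ∈ Set.Icc (0 : ℝ) π) :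
    ‖pIter P Q lam 0 t‖ ≤ K * ρ ^ ρ * (1 + 2 * M) * η ^ (-ρ) := by
  have hM : 0 ≤ M := by
    by_contra! h
    have := norm_nonneg lam
    nlinarith
  set B : ℝ := K * (ρ ^ ρ * η ^ (-ρ)) with hB
  have hB0 : 0 ≤ B := by positivity
  -- Half of the decay `e^{-2ηs}` absorbs `s ^ ρ`, the other half is kept for integration.
  have hpt : ∀ s ∈ Set.Icc (0 : ℝ) π,
      ‖Complex.exp (-(2 * Complex.I * lam) * s)‖ * ‖∫ x in (0 : ℝ)..s, P x‖ ≤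
        B * Real.exp (-(η * s)) := by
    intro s hs
    have h1 := rpow_mul_exp_neg_le hρ hη hs.1
    rw [neg_mul, norm_exp_neg_kernel, him]
    have h2 : Real.exp (2 * -η * s) = Real.exp (-(η * s)) * Real.exp (-(η * s)) := by
      rw [← Real.exp_add]; congr 1; ring
    rw [h2]
    calc _ ≤ Real.exp (-(η * s)) * Real.exp (-(η * s)) * (K * s ^ ρ) := by gcongr; exact hF s hs
      _ = K * (s ^ ρ * Real.exp (-(η * s))) * Real.exp (-(η * s)) := by ring
      _ ≤ _ := by rw [hB]; gcongr
  have hPt : IntervalIntegrable P volume 0 t :=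
    hP.mono_set (by rw [Set.uIcc_of_le ht.1, Set.uIcc_of_le pi_pos.le]
                    exact Set.Icc_subset_Icc_right ht.2)
  have hrep : pIter P Q lam 0 t =
      Complex.exp (-(2 * Complex.I * lam) * t) * (∫ s in (0 : ℝ)..t, P s) -
        ∫ u in (0 : ℝ)..t, -(2 * Complex.I * lam) * Complex.exp (-(2 * Complex.I * lam) * u) *
          ∫ s in (0 : ℝ)..u, P s := by
    rw [← integral_exp_mul_by_parts ht.1 _ hPt]
    simp only [pIter, neg_mul]
  have hexp : ∫ u in (0 : ℝ)..t, Real.exp (-(η * u)) ≤ 1 / η := by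
    have h : ∫ u in (0 : ℝ)..t, Real.exp (-(η * u)) = (1 - Real.exp (-(η * t))) / η := by
      rw [integral_eq_sub_of_hasDerivAt (f := fun u => -Real.exp (-(η * u)) / η)]
      · simp; ring
      · intro u _
        have := (((hasDerivAt_id u).const_mul η).neg.exp.neg.div_const η)
        refine this.congr_deriv ?_
        simp only [id]; field_simp; rfl
      · exact Continuous.intervalIntegrable (by fun_prop) _ _
    rw [h]; gcongr; linarith [Real.exp_pos (-(η * t))]
  have h2 : ‖∫ u in (0 : ℝ)..t, -(2 * Complex.I * lam) *
      Complex.exp (-(2 * Complex.I * lam) * u) * ∫ s in (0 : ℝ)..u, P s‖ ≤ 2 * M * B := by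
    calc _ ≤ ∫ u in (0 : ℝ)..t, 2 * ‖lam‖ * (B * Real.exp (-(η * u))) := by
            refine norm_integral_le_of_norm_le ht.1 ?_
              (Continuous.intervalIntegrable (by fun_prop) _ _)
            filter_upwards with u hu
            rw [norm_mul, norm_mul, mul_assoc]
            have h3 : ‖-(2 * Complex.I * lam)‖ = 2 * ‖lam‖ := by simp
            rw [h3]
            refine mul_le_mul_of_nonneg_left ?_ (by positivity)
            exact hpt u ⟨hu.1.le, hu.2.trans ht.2⟩
      _ = 2 * ‖lam‖ * B * ∫ u in (0 : ℝ)..t, Real.exp (-(η * u)) := by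
            rw [← intervalIntegral.integral_const_mul]; congr 1; ext u; ring
      _ ≤ 2 * (M * η) * B * (1 / η) := by
            gcongr
            exact integral_nonneg ht.1 fun _ _ => (Real.exp_pos _).le
      _ = 2 * M * B := by field_simp
  have h1 : ‖Complex.exp (-(2 * Complex.I * lam) * t) * ∫ s in (0 : ℝ)..t, P s‖ ≤ B := by
    rw [norm_mul]
    refine (hpt t ht).trans (mul_le_of_le_one_right hB0 (Real.exp_le_one_iff.2 ?_))
    have := mul_nonneg hη.le ht.1
    linarith
  rw [hrep]
  calc _ ≤ B + 2 * M * B := (norm_sub_le _ _).trans (add_le_add h1 h2)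
    _ = _ := by rw [hB]; ring

/-! ### Contraction by the recursion -/

/-- The inner kernel `∫₀ᵗ e^{-2η(t-s)} |Q(s)| ds`, which bounds the inner integral in the
recursion for `pIter` when `Im λ = -η`. -/
noncomputable def innerKernel (Q : ℝ → ℂ) (η t : ℝ) : ℝ :=
  ∫ s in (0 : ℝ)..t, Real.exp (-(2 * η * (t - s))) * ‖Q s‖

lemma continuousOn_innerKernel {Q : ℝ → ℂ} (hQ : IntervalIntegrable Q volume 0 π) (η : ℝ) :
    ContinuousOn (innerKernel Q η) (Set.Icc 0 π) := by
  have h : innerKernel Q η = fun t => Real.exp (-(2 * η * t)) *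
      ∫ s in (0 : ℝ)..t, Real.exp (2 * η * s) * ‖Q s‖ := by
    ext t
    rw [innerKernel, ← intervalIntegral.integral_const_mul]
    congr 1; ext s
    rw [← mul_assoc, ← Real.exp_add]; congr 2; ring
  rw [h, ← Set.uIcc_of_le pi_pos.le]
  refine ContinuousOn.mul (by fun_prop) 
    (continuousOn_primitive_interval' (b₁ := 0) (b₂ := π) ?_ Set.left_mem_uIcc)
  exact hQ.norm.continuousOn_mul (by fun_prop)

lemma innerKernel_nonneg {Q : ℝ → ℂ} {η t : ℝ} (ht : 0 ≤ t) : 0 ≤ innerKernel Q η t :=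
  integral_nonneg ht fun _ _ => by positivity

lemma intervalIntegrable_norm_mul_innerKernel {P Q : ℝ → ℂ}
    (hP : IntervalIntegrable P volume 0 π) (hQ : IntervalIntegrable Q volume 0 π) (η : ℝ) :
    IntervalIntegrable (fun t => ‖P t‖ * innerKernel Q η t) volume 0 π :=
  hP.norm.mul_continuousOn (by
    rw [Set.uIcc_of_le pi_pos.le]; exact continuousOn_innerKernel hQ η)

/-- One step of the recursion contracts the sup norm on `[0, π]` by the factor
`∫₀^π |P| * innerKernel Q η`. Only the majorant has to be integrable, so no regularity of `pₙ`
is involved. -/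
lemma norm_pIter_succ_le {P Q : ℝ → ℂ} (hP : IntervalIntegrable P volume 0 π)
    (hQ : IntervalIntegrable Q volume 0 π) {η : ℝ} {lam : ℂ} (him : lam.im = -η)
    {n : ℕ} {b : ℝ} (hb : 0 ≤ b) (hn : ∀ t ∈ Set.Icc (0 : ℝ) π, ‖pIter P Q lam n t‖ ≤ b)
    {t : ℝ} (ht : t ∈ Set.Icc (0 : ℝ) π) :
    ‖pIter P Q lam (n + 1) t‖ ≤ b * ∫ s in (0 : ℝ)..π, ‖P s‖ * innerKernel Q η s := by
  have hint := intervalIntegrable_norm_mul_innerKernel hP hQ η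
  have hsub : Set.uIcc 0 t ⊆ Set.uIcc 0 π := by
    rw [Set.uIcc_of_le ht.1, Set.uIcc_of_le pi_pos.le]; exact Set.Icc_subset_Icc_right ht.2
  calc ‖pIter P Q lam (n + 1) t‖
      ≤ ∫ s in (0 : ℝ)..t, b * (‖P s‖ * innerKernel Q η s) := by
        rw [pIter]
        refine norm_integral_le_of_norm_le ht.1 ?_ ((hint.mono_set hsub).const_mul b)
        filter_upwards with u hu
        have hu' : Set.uIcc 0 u ⊆ Set.uIcc 0 π := by
          rw [Set.uIcc_of_le hu.1.le, Set.uIcc_of_le pi_pos.le]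
          exact Set.Icc_subset_Icc_right (hu.2.trans ht.2)
        have hin : ‖∫ v in (0 : ℝ)..u, Complex.exp (2 * Complex.I * lam * (v : ℂ)) * Q v *
            pIter P Q lam n v‖ ≤ ∫ v in (0 : ℝ)..u, Real.exp (2 * η * v) * ‖Q v‖ * b := by
          refine norm_integral_le_of_norm_le hu.1.le ?_ ?_
          · filter_upwards with v hv
            rw [norm_mul, norm_mul, norm_exp_kernel, him]
            have : -(2 * -η * v) = 2 * η * v := by ring
            rw [this]
            gcongr
            exact hn v ⟨hv.1.le, hv.2.trans (hu.2.trans ht.2)⟩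
          · exact ((hQ.mono_set hu').norm.continuousOn_mul (by fun_prop)).mul_const b
        rw [norm_mul, norm_mul, norm_exp_neg_kernel, him]
        calc _ ≤ Real.exp (2 * -η * u) * ‖P u‖ *
              ∫ v in (0 : ℝ)..u, Real.exp (2 * η * v) * ‖Q v‖ * b := by gcongr
          _ = b * (‖P u‖ * (Real.exp (2 * -η * u) *
              ∫ v in (0 : ℝ)..u, Real.exp (2 * η * v) * ‖Q v‖)) := by
                rw [intervalIntegral.integral_mul_const]; ring
          _ = b * (‖P u‖ * innerKernel Q η u) := by
                rw [innerKernel, ← intervalIntegral.integral_const_mul]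
                congr 3; ext v
                rw [← mul_assoc, ← Real.exp_add]; congr 2; ring
    _ = b * ∫ s in (0 : ℝ)..t, ‖P s‖ * innerKernel Q η s :=
        intervalIntegral.integral_const_mul _ _
    _ ≤ _ := by
        refine mul_le_mul_of_nonneg_left ?_ hb
        refine integral_mono_interval le_rfl ht.1 ht.2 ?_ hint
        filter_upwards [ae_restrict_mem measurableSet_Ioc] with s hs
        exact mul_nonneg (norm_nonneg _) (innerKernel_nonneg hs.1.le)

/-! ### Decay of the contraction factor -/

/-- Dominated convergence: `e^{-2η(t-s)} → 0` for every `s < t`. -/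
lemma tendsto_innerKernel {Q : ℝ → ℂ} {t : ℝ} (ht : 0 ≤ t)
    (hQ : IntervalIntegrable Q volume 0 t) :
    Filter.Tendsto (fun η => innerKernel Q η t) Filter.atTop (nhds 0) := by
  suffices h : Filter.Tendsto (fun η => innerKernel Q η t) Filter.atTop
      (nhds (∫ _ in (0 : ℝ)..t, (0 : ℝ))) by simpa using h
  refine tendsto_integral_filter_of_dominated_convergence (fun s => ‖Q s‖) ?_ ?_ hQ.norm ?_
  · filter_upwards with η
    have : IntervalIntegrable (fun s => Real.exp (-(2 * η * (t - s))) * ‖Q s‖) volume 0 t :=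
      hQ.norm.continuousOn_mul (by fun_prop)
    exact (intervalIntegrable_iff.1 this).aestronglyMeasurable
  · filter_upwards [Filter.eventually_ge_atTop 0] with η hη
    filter_upwards with s hs
    rw [Set.uIoc_of_le ht] at hs
    rw [norm_mul, norm_norm, Real.norm_of_nonneg (Real.exp_pos _).le]
    refine mul_le_of_le_one_left (norm_nonneg _) (Real.exp_le_one_iff.2 ?_)
    have := mul_nonneg hη (sub_nonneg.2 hs.2)
    linarith
  · have hne : ∀ᵐ s : ℝ, s ≠ t := by simp [ae_iff, measure_singleton]
    filter_upwards [hne] with s hst hs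
    rw [Set.uIoc_of_le ht] at hs
    have hpos : 0 < 2 * (t - s) := by have := lt_of_le_of_ne hs.2 hst; linarith
    have h1 : Filter.Tendsto (fun η : ℝ => Real.exp (-(2 * η * (t - s)))) Filter.atTop
        (nhds 0) := by
      refine Real.tendsto_exp_neg_atTop_nhds_zero.comp ?_
      refine (Filter.tendsto_id.atTop_mul_const hpos).congr fun η => ?_
      simp only [id]; ring
    simpa using h1.mul_const ‖Q s‖

lemma tendsto_integral_norm_mul_innerKernel {P Q : ℝ → ℂ}
    (hP : IntervalIntegrable P volume 0 π) (hQ : IntervalIntegrable Q volume 0 π) :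
    Filter.Tendsto (fun η => ∫ s in (0 : ℝ)..π, ‖P s‖ * innerKernel Q η s)
      Filter.atTop (nhds 0) := by
  have hsub : ∀ s ∈ Set.Ioc 0 π, IntervalIntegrable Q volume 0 s := fun s hs =>
    hQ.mono_set (by rw [Set.uIcc_of_le hs.1.le, Set.uIcc_of_le pi_pos.le]
                    exact Set.Icc_subset_Icc_right hs.2)
  suffices h : Filter.Tendsto (fun η => ∫ s in (0 : ℝ)..π, ‖P s‖ * innerKernel Q η s)
      Filter.atTop (nhds (∫ _ in (0 : ℝ)..π, (0 : ℝ))) by simpa using h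
  refine tendsto_integral_filter_of_dominated_convergence
    (fun s => ‖P s‖ * ∫ x in (0 : ℝ)..π, ‖Q x‖) ?_ ?_ (hP.norm.mul_const _) ?_
  · filter_upwards with η
    exact (intervalIntegrable_iff.1
      (intervalIntegrable_norm_mul_innerKernel hP hQ η)).aestronglyMeasurable
  · filter_upwards [Filter.eventually_ge_atTop 0] with η hη
    filter_upwards with s hs
    rw [Set.uIoc_of_le pi_pos.le] at hs
    rw [norm_mul, norm_norm, Real.norm_of_nonneg (innerKernel_nonneg hs.1.le)]
    gcongr
    calc innerKernel Q η s ≤ ∫ x in (0 : ℝ)..s, ‖Q x‖ := by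
          refine integral_mono_on hs.1.le
            ((hsub s hs).norm.continuousOn_mul (by fun_prop)) (hsub s hs).norm fun x hx => ?_
          refine mul_le_of_le_one_left (norm_nonneg _) (Real.exp_le_one_iff.2 ?_)
          have := mul_nonneg hη (sub_nonneg.2 hx.2)
          linarith
      _ ≤ _ := integral_mono_interval le_rfl hs.1.le hs.2
          (by filter_upwards; simp) hQ.norm
  · filter_upwards with s hs
    rw [Set.uIoc_of_le pi_pos.le] at hs
    simpa using (tendsto_innerKernel hs.1.le (hsub s hs)).const_mul ‖P s‖

/-! ### The sector and the sum -/

/-- In the sector `-π + ε ≤ arg λ ≤ -ε` the modulus is comparable with `|Im λ|`. -/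
lemma sin_mul_norm_le_neg_im {ε : ℝ} (hε : 0 < ε) (hε' : ε < π / 10) {lam : ℂ}
    (h1 : -π + ε ≤ lam.arg) (h2 : lam.arg ≤ -ε) : Real.sin ε * ‖lam‖ ≤ -lam.im := by
  have hsin : Real.sin ε ≤ Real.sin (-lam.arg) := by
    rcases le_total (-lam.arg) (π / 2) with h | h
    · exact Real.sin_le_sin_of_le_of_le_pi_div_two (by linarith) h (by linarith)
    · rw [← Real.sin_pi_sub (-lam.arg)]
      exact Real.sin_le_sin_of_le_of_le_pi_div_two (by linarith) (by linarith) (by linarith)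
  have him := Complex.norm_mul_sin_arg lam
  rw [Real.sin_neg] at hsin
  have := mul_le_mul_of_nonneg_right hsin (norm_nonneg lam)
  linarith

/-- Formula (64) of Lemma 5: if `P, Q ∈ L¹(0,π)`, `ρ > 0`, and
`lim_{h→0⁺} (∫₀^h P)/h^ρ = ν ≠ 0`, then
`∑_{n=1}^∞ |pₙ(t,λ)| = o(1)/|Im λ|^ρ` as `|Im λ| → ∞`, uniformly in `t ∈ [0,π]`
and uniformly in the sector `Ω_ε⁻ = {-π + ε ≤ arg λ ≤ -ε}`. -/
theorem pIter_tail_sum_lower_sector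
    (P Q : ℝ → ℂ)
    (hP : IntervalIntegrable P MeasureTheory.volume 0 Real.pi)
    (hQ : IntervalIntegrable Q MeasureTheory.volume 0 Real.pi)
    (ρ : ℝ) (hρ : 0 < ρ) (ν : ℂ) (hν : ν ≠ 0)
    (hlim : Filter.Tendsto
      (fun h : ℝ => (∫ x in (0 : ℝ)..h, P x) / ((h ^ ρ : ℝ) : ℂ))
      (nhdsWithin 0 (Set.Ioi 0)) (nhds ν))
    (ε : ℝ) (hε : 0 < ε) (hε' : ε < Real.pi / 10) :
    ∀ δ > (0 : ℝ), ∃ C : ℝ, ∀ t ∈ Set.Icc (0 : ℝ) Real.pi, ∀ lam : ℂ,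
      -Real.pi + ε ≤ lam.arg → lam.arg ≤ -ε → C ≤ |lam.im| →
        |lam.im| ^ ρ * (∑' n : ℕ, ‖pIter P Q lam (n + 1) t‖) ≤ δ := by
  intro δ hδ
  obtain ⟨K, hK, hF⟩ := exists_primitive_le hP hρ hlim
  have hsin : 0 < Real.sin ε := Real.sin_pos_of_pos_of_lt_pi hε (by linarith [pi_pos])
  set M : ℝ := (Real.sin ε)⁻¹ with hM
  have hM0 : 0 < M := inv_pos.2 hsin
  set D : ℝ := K * ρ ^ ρ * (1 + 2 * M) with hD
  have hD0 : 0 ≤ D := by positivity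
  set A : ℝ → ℝ := fun η => ∫ s in (0 : ℝ)..π, ‖P s‖ * innerKernel Q η s with hA
  have hA0 : ∀ η, 0 ≤ A η := fun η => integral_nonneg pi_pos.le fun s hs =>
    mul_nonneg (norm_nonneg _) (innerKernel_nonneg hs.1)
  -- For `A ≤ 1/2` the geometric series `∑ D A^{n+1}` is at most `2DA`, and `D + 1` keeps the
  -- denominator positive when `D = 0`.
  have hτ : 0 < min (1 / 2) (δ / (2 * (D + 1))) := by positivity
  have hev := (tendsto_integral_norm_mul_innerKernel hP hQ).eventually (ge_mem_nhds hτ)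
  obtain ⟨C, hC⟩ := Filter.eventually_atTop.1 hev
  refine ⟨max C 1, fun t ht lam h1 h2 hlam => ?_⟩
  have hsec := sin_mul_norm_le_neg_im hε hε' h1 h2
  set η : ℝ := -lam.im with hηdef
  have hη0 : 0 ≤ η := (mul_nonneg hsin.le (norm_nonneg _)).trans hsec
  have habs : |lam.im| = η := by rw [← abs_neg, abs_of_nonneg hη0]
  rw [habs] at hlam ⊢
  have hη : 0 < η := one_pos.trans_le ((le_max_right _ _).trans hlam)
  have him : lam.im = -η := by rw [hηdef, neg_neg]
  have hnorm : ‖lam‖ ≤ M * η := by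
    rw [hM, inv_mul_eq_div, le_div_iff₀ hsin]; linarith
  have hAη : A η ≤ min (1 / 2) (δ / (2 * (D + 1))) := hC η ((le_max_left _ _).trans hlam)
  have hA1 : A η ≤ 1 / 2 := hAη.trans (min_le_left _ _)
  have hA2 : A η * (2 * (D + 1)) ≤ δ := by
    rw [← le_div_iff₀ (by positivity)]; exact hAη.trans (min_le_right _ _)
  have hηρ : 0 ≤ η ^ (-ρ) := Real.rpow_nonneg hη0 _
  have hbound : ∀ n : ℕ, ∀ t ∈ Set.Icc (0 : ℝ) π,
      ‖pIter P Q lam n t‖ ≤ D * η ^ (-ρ) * A η ^ n := by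
    intro n
    induction n with
    | zero =>
      intro t ht
      simpa using norm_pIter_zero_le (Q := Q) hP hρ hK hF hη him hnorm ht
    | succ n ih =>
      intro t ht
      refine (norm_pIter_succ_le hP hQ him
        (mul_nonneg (mul_nonneg hD0 hηρ) (pow_nonneg (hA0 η) n)) ih ht).trans_eq ?_
      rw [pow_succ, ← mul_assoc]
  have hgeom : HasSum (fun n : ℕ => D * η ^ (-ρ) * A η ^ (n + 1))
      (D * η ^ (-ρ) * A η * (1 - A η)⁻¹) := by
    have := (hasSum_geometric_of_lt_one (hA0 η) (by linarith)).mul_left (D * η ^ (-ρ) * A η)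
    refine this.congr_fun ?_
    intro n; ring
  have hsum : ∑' n : ℕ, ‖pIter P Q lam (n + 1) t‖ ≤ D * η ^ (-ρ) * A η * (1 - A η)⁻¹ := by
    rw [← hgeom.tsum_eq]
    exact Summable.tsum_le_tsum (fun n => hbound (n + 1) t ht)
      (Summable.of_nonneg_of_le (fun _ => norm_nonneg _) (fun n => hbound (n + 1) t ht)
        hgeom.summable) hgeom.summable
  have hinv : (1 - A η)⁻¹ ≤ 2 := by
    rw [inv_le_comm₀ (by linarith) two_pos]; linarith
  have hA0' := hA0 η
  calc η ^ ρ * ∑' n : ℕ, ‖pIter P Q lam (n + 1) t‖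
      ≤ η ^ ρ * (D * η ^ (-ρ) * A η * 2) := by
        refine mul_le_mul_of_nonneg_left (hsum.trans ?_) (Real.rpow_nonneg hη0 _)
        exact mul_le_mul_of_nonneg_left hinv (by positivity)
    _ = (η ^ ρ * η ^ (-ρ)) * (D * A η * 2) := by ring
    _ = D * A η * 2 := by
        rw [← Real.rpow_add hη, add_neg_cancel, Real.rpow_zero, one_mul]
    _ ≤ δ := by linarith
end
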